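/- arXiv:1204.3097 — 5 statements merged into one kernel-verified Lean document; each statement's English description precedes it below -/
import Mathlib

section
/- Let λ_1, …, λ_n be distinct nonzero real numbers, let A = diag(λ_1, …, λ_n) ∈ ℝ^{n×n}, and let C = (c_1, …, c_n) ∈ ℝ^{1×n} be a row vector with c_j ≠ 0 for every j. Fix K with 2K+1 ≤ n. If x, x' ∈ ℝ^n are both K-sparse and C A^t x = C A^t x' for every t = 0, 1, …, 2K, then x = x'. (In other words, a K-sparse initial state of the linear system x_{t+1} = A x_t with scalar observations y_t = C x_t is uniquely determined by the 2K+1 observations y_0, …, y_{2K}.) -/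
open Matrix

/-- A `K`-sparse initial state of the linear system `x_{t+1} = A x_t`
with `A = diag(λ₁, …, λₙ)` (distinct nonzero diagonal entries) and scalar observations
`y_t = C x_t` (all entries of `C` nonzero) is uniquely determined by the `2K+1`
observations `y_0, …, y_{2K}`, provided `2K+1 ≤ n`. -/
theorem sparse_initial_state_unique_diagonal
    {n K : ℕ} (hK : 2 * K + 1 ≤ n)
    (lam : Fin n → ℝ) (hdistinct : Function.Injective lam)
    (hnonzero : ∀ j, lam j ≠ 0)
    (C : Fin n → ℝ) (hC : ∀ j, C j ≠ 0)
    (x x' : Fin n → ℝ)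
    (hx : (Finset.univ.filter (fun i => x i ≠ 0)).card ≤ K)
    (hx' : (Finset.univ.filter (fun i => x' i ≠ 0)).card ≤ K)
    (hobs : ∀ t : ℕ, t ≤ 2 * K →
      C ⬝ᵥ ((Matrix.diagonal lam ^ t).mulVec x) =
      C ⬝ᵥ ((Matrix.diagonal lam ^ t).mulVec x')) :
    x = x' := by
  have hpow : ∀ t : ℕ, t ≤ 2 * K → ∑ j, C j * (x j - x' j) * lam j ^ t = 0 := by
    intro t ht
    have h := hobs t ht
    simp only [Matrix.diagonal_pow, dotProduct, Matrix.mulVec_diagonal, Pi.pow_apply] at h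
    rw [← sub_eq_zero, ← Finset.sum_sub_distrib] at h
    rw [← h]
    exact Finset.sum_congr rfl fun j _ => by ring
  have hpoly : ∀ p : Polynomial ℝ, p.natDegree ≤ 2 * K →
      ∑ j, C j * (x j - x' j) * p.eval (lam j) = 0 := by
    intro p hp
    simp only [Polynomial.eval_eq_sum_range, Finset.mul_sum]
    rw [Finset.sum_comm]
    refine Finset.sum_eq_zero fun t ht => ?_
    have h := hpow t (by rw [Finset.mem_range] at ht; omega)
    calc _ = p.coeff t * ∑ j, C j * (x j - x' j) * lam j ^ t := by
          rw [Finset.mul_sum]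
          exact Finset.sum_congr rfl fun j _ => by ring
      _ = 0 := by rw [h, mul_zero]
  funext j
  by_contra hj
  set S := Finset.univ.filter (fun i => x i ≠ 0) ∪ Finset.univ.filter (fun i => x' i ≠ 0) with hS
  have hScard : S.card ≤ 2 * K := (Finset.card_union_le _ _).trans (by omega)
  have h := hpoly (∏ i ∈ S.erase j, (Polynomial.X - Polynomial.C (lam i))) (by
    rw [Polynomial.natDegree_finset_prod_X_sub_C_eq_card]
    exact (Finset.card_le_card (Finset.erase_subset _ _)).trans hScard)
  rw [Finset.sum_eq_single j] at h
  · rw [Polynomial.eval_prod] at h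
    refine mul_ne_zero (mul_ne_zero (hC j) (sub_ne_zero.mpr hj)) ?_ h
    refine Finset.prod_ne_zero_iff.mpr fun i hi => ?_
    simp only [Polynomial.eval_sub, Polynomial.eval_X, Polynomial.eval_C]
    exact sub_ne_zero.mpr fun e => (Finset.ne_of_mem_erase hi) (hdistinct e).symm
  · intro i _ hij
    by_cases hi : i ∈ S
    · rw [Polynomial.eval_prod, Finset.prod_eq_zero (Finset.mem_erase.mpr ⟨hij, hi⟩) (by simp),
        mul_zero]
    · simp only [hS, Finset.mem_union, Finset.mem_filter, Finset.mem_univ, true_and, not_or,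
        not_not] at hi
      rw [hi.1, hi.2]
      ring
  · intro hj'
    exact absurd (Finset.mem_univ j) hj'
end

section
/- Let λ_1, …, λ_n be distinct real numbers, let K ≥ 1, set m = 2K+1, and let S ⊆ {1, …, n} with |S| = K. Then there exists a vector g ∈ ℝ^m such that ∑_{t=1}^{m} g_t λ_i^{t-1} = 1 for every i ∈ S, and ∑_{t=1}^{m} g_t λ_i^{t-1} < 1 for every i ∉ S. -/
/-- For distinct real numbers `λ₁, …, λₙ`, `K ≥ 1`, `m = 2K+1`, and a
`K`-element subset `S ⊆ {1, …, n}`, there exists `g ∈ ℝ^m` such that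
`∑_{t=1}^{m} g_t λ_i^{t-1} = 1` for `i ∈ S` and `∑_{t=1}^{m} g_t λ_i^{t-1} < 1`
for `i ∉ S`. -/
theorem exists_dual_certificate_vandermonde
    {n K : ℕ} (hK : 1 ≤ K)
    (lam : Fin n → ℝ) (hdistinct : Function.Injective lam)
    (S : Finset (Fin n)) (hS : S.card = K) :
    ∃ g : Fin (2 * K + 1) → ℝ,
      (∀ i ∈ S, ∑ t, g t * lam i ^ (t : ℕ) = 1) ∧
      (∀ i ∉ S, ∑ t, g t * lam i ^ (t : ℕ) < 1) := by
  classical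
  let q : Polynomial ℝ := ∏ j ∈ S, (Polynomial.X - Polynomial.C (lam j))
  let p : Polynomial ℝ := 1 - q ^ 2
  have hq : q.natDegree = K := by
    have h := Polynomial.natDegree_finsetProd_X_sub_C_eq_card S lam
    rw [← hS]
    exact h
  have hp : p.natDegree < 2 * K + 1 := by
    have h1 : p.natDegree ≤ max (1 : Polynomial ℝ).natDegree (q ^ 2).natDegree :=
      Polynomial.natDegree_sub_le _ _
    have h2 : (q ^ 2).natDegree ≤ 2 * q.natDegree := Polynomial.natDegree_pow_le
    rw [Polynomial.natDegree_one] at h1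
    omega
  have key : ∀ x : ℝ, ∑ t : Fin (2 * K + 1), p.coeff t * x ^ (t : ℕ)
      = 1 - (∏ j ∈ S, (x - lam j)) ^ 2 := by
    intro x
    rw [Fin.sum_univ_eq_sum_range (fun t => p.coeff t * x ^ t) (2 * K + 1),
      ← Polynomial.eval_eq_sum_range' hp]
    simp [p, q, Polynomial.eval_prod]
  refine ⟨fun t => p.coeff t, fun i hi => ?_, fun i hi => ?_⟩
  · rw [key, Finset.prod_eq_zero hi (sub_self _)]
    norm_num
  · rw [key]
    have h : ∏ j ∈ S, (lam i - lam j) ≠ 0 := by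
      rw [Finset.prod_ne_zero_iff]
      intro j hj h0
      have hij : i = j := hdistinct (sub_eq_zero.mp h0)
      exact hi (hij ▸ hj)
    have := sq_pos_of_ne_zero h
    linarith
end

section
/- Let λ_1, …, λ_n be distinct real numbers, let K ≥ 1 with 2K+1 ≤ n, set m = 2K+1, and let M ∈ ℝ^{m×n} be the Vandermonde-type matrix with entries M_{i,j} = λ_j^{i-1}. Let z₀ ∈ ℝ^n have all entries nonnegative and at most K nonzero entries. Then z₀ is the unique minimizer of the ℓ1 norm over the affine set of solutions: for every z ∈ ℝ^n with M z = M z₀ and z ≠ z₀, one has ‖z‖₁ > ‖z₀‖₁. -/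
open Matrix

/-- For the `(2K+1) × n` Vandermonde-type matrix `M` built from distinct
real numbers `λ₁, …, λₙ` (with `2K+1 ≤ n`, `K ≥ 1`), a nonnegative vector `z₀` with at
most `K` nonzero entries is the unique ℓ1-minimizer over the affine solution set:
any other solution `z` of `M z = M z₀` has strictly larger ℓ1 norm. -/
theorem nonneg_sparse_unique_l1_minimizer_vandermonde
    {n K : ℕ} (hK : 1 ≤ K) (hn : 2 * K + 1 ≤ n)
    (lam : Fin n → ℝ) (hdistinct : Function.Injective lam)
    (M : Matrix (Fin (2 * K + 1)) (Fin n) ℝ)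
    (hM : ∀ i j, M i j = lam j ^ (i : ℕ))
    (z₀ : Fin n → ℝ) (hnonneg : ∀ i, 0 ≤ z₀ i)
    (hsparse : (Finset.univ.filter (fun i => z₀ i ≠ 0)).card ≤ K)
    (z : Fin n → ℝ) (hsol : M.mulVec z = M.mulVec z₀) (hne : z ≠ z₀) :
    ∑ i, |z₀ i| < ∑ i, |z i| := by
  classical
  have key : ∀ p : Polynomial ℝ, p.natDegree < 2 * K + 1 →
      ∑ i, p.eval (lam i) * z i = ∑ i, p.eval (lam i) * z₀ i := by
    intro p hp
    have row : ∀ k ∈ Finset.range (2 * K + 1),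
        ∑ i, lam i ^ k * z i = ∑ i, lam i ^ k * z₀ i := by
      intro k hk
      have h := congrFun hsol ⟨k, Finset.mem_range.mp hk⟩
      simpa [Matrix.mulVec, dotProduct, hM] using h
    have expand : ∀ w : Fin n → ℝ, ∑ i, p.eval (lam i) * w i
        = ∑ k ∈ Finset.range (2 * K + 1), p.coeff k * ∑ i, lam i ^ k * w i := by
      intro w
      simp_rw [Polynomial.eval_eq_sum_range' hp, Finset.sum_mul, Finset.mul_sum]
      rw [Finset.sum_comm]
      simp_rw [mul_assoc]
    rw [expand, expand]
    exact Finset.sum_congr rfl fun k hk => by rw [row k hk]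
  set S := Finset.univ.filter (fun i => z₀ i ≠ 0) with hS
  have hSz : ∀ i, i ∉ S → z₀ i = 0 := by
    intro i hi
    simpa [hS] using hi
  have deg : ∀ T : Finset (Fin n),
      (∏ j ∈ T, (Polynomial.X - Polynomial.C (lam j))).natDegree = T.card := by
    intro T
    exact Polynomial.natDegree_finsetProd_X_sub_C_eq_card T lam
  by_contra hcon
  push Not at hcon
  have hsum : ∑ i, z i = ∑ i, z₀ i := by
    simpa using key 1 (by simp)
  have habs : ∑ i, |z₀ i| = ∑ i, z₀ i :=
    Finset.sum_congr rfl fun i _ => abs_of_nonneg (hnonneg i)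
  have hznn : ∀ i, 0 ≤ z i := by
    have h0 : ∑ i, (|z i| - z i) = 0 := by
      apply le_antisymm
      · rw [Finset.sum_sub_distrib]; linarith
      · exact Finset.sum_nonneg fun i _ => sub_nonneg.mpr (le_abs_self _)
    intro i
    have := (Finset.sum_eq_zero_iff_of_nonneg
      (fun i _ => sub_nonneg.mpr (le_abs_self (z i)))).mp h0 i (Finset.mem_univ i)
    have h2 := abs_nonneg (z i)
    linarith
  have hzS : ∀ i, i ∉ S → z i = 0 := by
    have h1 := key ((∏ j ∈ S, (Polynomial.X - Polynomial.C (lam j))) ^ 2) (by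
      rw [Polynomial.natDegree_pow, deg]; omega)
    simp only [Polynomial.eval_pow, Polynomial.eval_prod, Polynomial.eval_sub,
      Polynomial.eval_X, Polynomial.eval_C] at h1
    have h2 : ∑ i, (∏ j ∈ S, (lam i - lam j)) ^ 2 * z₀ i = 0 := by
      refine Finset.sum_eq_zero fun i _ => ?_
      by_cases hi : i ∈ S
      · rw [Finset.prod_eq_zero hi (sub_self _)]; ring
      · rw [hSz i hi, mul_zero]
    rw [h2] at h1
    intro i hi
    have h3 := (Finset.sum_eq_zero_iff_of_nonneg
      (fun i _ => mul_nonneg (sq_nonneg _) (hznn i))).mp h1 i (Finset.mem_univ i)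
    refine (mul_eq_zero.mp h3).resolve_left (pow_ne_zero 2 ?_)
    refine Finset.prod_ne_zero_iff.mpr fun j hj => sub_ne_zero.mpr fun h => hi ?_
    rw [hdistinct h]; exact hj
  apply hne
  funext i
  by_cases hi : i ∈ S
  · have h1 := key (∏ j ∈ S.erase i, (Polynomial.X - Polynomial.C (lam j))) (by
      rw [deg]
      have := Finset.card_erase_le (s := S) (a := i)
      omega)
    simp only [Polynomial.eval_prod, Polynomial.eval_sub,
      Polynomial.eval_X, Polynomial.eval_C] at h1
    have only : ∀ w : Fin n → ℝ, (∀ i, i ∉ S → w i = 0) →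
        ∑ k, (∏ j ∈ S.erase i, (lam k - lam j)) * w k
          = (∏ j ∈ S.erase i, (lam i - lam j)) * w i := by
      intro w hw
      refine Finset.sum_eq_single i (fun k _ hk => ?_) (by simp)
      by_cases hkS : k ∈ S
      · rw [Finset.prod_eq_zero (Finset.mem_erase.mpr ⟨hk, hkS⟩) (sub_self _), zero_mul]
      · rw [hw k hkS, mul_zero]
    rw [only z hzS, only z₀ hSz] at h1
    refine mul_left_cancel₀ ?_ h1
    refine Finset.prod_ne_zero_iff.mpr fun j hj => sub_ne_zero.mpr fun h => ?_
    exact (Finset.mem_erase.mp hj).1 (hdistinct h).symm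
  · rw [hzS i hi, hSz i hi]
end

section
/- Let λ_1, …, λ_n be distinct nonzero real numbers, A = diag(λ_1, …, λ_n), and let C = (c_1, …, c_n) ∈ ℝ^{1×n} with c_j ≠ 0 for every j. Let K ≥ 1 with 2K+1 ≤ n. Suppose x₀ ∈ ℝ^n is K-sparse and satisfies the sign condition c_i (x₀)_i ≥ 0 for every i. Let y ∈ ℝ^{2K+1} be the vector of observations y_t = C A^t x₀ for t = 0, 1, …, 2K, and let M ∈ ℝ^{(2K+1)×n} be the Vandermonde-type matrix with entries M_{t,j} = λ_j^{t-1}. Then z₀ := diag(c_1, …, c_n) x₀ is the unique minimizer of ‖z‖₁ subject to M z = y, and consequently x₀ is exactly recovered from the 2K+1 successive observations via (x₀)_i = (z₀)_i / c_i. -/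
open Matrix

/-- Proposition 2 of the paper. With `A = diag(λ₁, …, λₙ)` (distinct
nonzero diagonal entries), a row vector `C` with nonzero entries, a `K`-sparse initial
state `x₀` satisfying the sign condition `c_i (x₀)_i ≥ 0`, and the `2K+1` successive
observations `y_t = C A^t x₀` (`t = 0, …, 2K`), the vector `z₀ = diag(C) x₀` is the
unique ℓ1-minimizer of `‖z‖₁` subject to `M z = y` (where `M` is the Vandermonde-type
matrix `M_{t,j} = λ_j^t`), and `x₀` is recovered via `(x₀)_i = (z₀)_i / c_i`. -/
theorem sparse_recovery_l1_diagonal_sign_condition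
    {n K : ℕ} (hK : 1 ≤ K) (hn : 2 * K + 1 ≤ n)
    (lam : Fin n → ℝ) (hdistinct : Function.Injective lam)
    (hnonzero : ∀ j, lam j ≠ 0)
    (C : Fin n → ℝ) (hC : ∀ j, C j ≠ 0)
    (x₀ : Fin n → ℝ)
    (hsparse : (Finset.univ.filter (fun i => x₀ i ≠ 0)).card ≤ K)
    (hsign : ∀ i, 0 ≤ C i * x₀ i)
    (y : Fin (2 * K + 1) → ℝ)
    (hy : ∀ t : Fin (2 * K + 1),
      y t = C ⬝ᵥ ((Matrix.diagonal lam ^ (t : ℕ)).mulVec x₀))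
    (M : Matrix (Fin (2 * K + 1)) (Fin n) ℝ)
    (hM : ∀ t j, M t j = lam j ^ (t : ℕ))
    (z₀ : Fin n → ℝ) (hz₀ : z₀ = (Matrix.diagonal C).mulVec x₀) :
    (M.mulVec z₀ = y ∧
      ∀ z : Fin n → ℝ, M.mulVec z = y → z ≠ z₀ → ∑ i, |z₀ i| < ∑ i, |z i|) ∧
    ∀ i, x₀ i = z₀ i / C i := by
  classical
  have hz : ∀ i, z₀ i = C i * x₀ i := by
    intro i; rw [hz₀, Matrix.mulVec_diagonal]
  have hfeas : M.mulVec z₀ = y := by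
    ext t
    rw [hy t, Matrix.diagonal_pow]
    simp only [Matrix.mulVec, dotProduct]
    refine Finset.sum_congr rfl fun j _ => ?_
    have h := Matrix.mulVec_diagonal (lam ^ (t : ℕ)) x₀ j
    simp only [Matrix.mulVec, dotProduct] at h
    rw [h, hM, hz, Pi.pow_apply]
    ring
  refine ⟨⟨hfeas, ?_⟩, fun i => ?_⟩
  · intro z hzy hne
    have hpow : ∀ t, t < 2 * K + 1 → ∑ j, lam j ^ t * (z j - z₀ j) = 0 := by
      intro t ht
      have h := congrFun (hzy.trans hfeas.symm) ⟨t, ht⟩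
      simp only [Matrix.mulVec, dotProduct, hM] at h
      simp only [mul_sub, Finset.sum_sub_distrib]
      linarith
    have hpoly : ∀ p : Polynomial ℝ, p.natDegree < 2 * K + 1 →
        ∑ j, p.eval (lam j) * (z j - z₀ j) = 0 := by
      intro p hp
      simp only [Polynomial.eval_eq_sum_range, Finset.sum_mul]
      rw [Finset.sum_comm]
      refine Finset.sum_eq_zero fun t ht => ?_
      have h := hpow t (by rw [Finset.mem_range] at ht; omega)
      simp only [mul_assoc]
      rw [← Finset.mul_sum, h, mul_zero]
    have hz0 : ∀ i, 0 ≤ z₀ i := fun i => by rw [hz]; exact hsign i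
    have hsum : ∑ i, z i = ∑ i, z₀ i := by
      have h := hpow 0 (by omega)
      simp only [pow_zero, one_mul, Finset.sum_sub_distrib] at h
      linarith
    have habs0 : ∑ i, |z₀ i| = ∑ i, z i := by
      rw [hsum]; exact Finset.sum_congr rfl fun i _ => abs_of_nonneg (hz0 i)
    rw [habs0]
    refine lt_of_le_of_ne (Finset.sum_le_sum fun i _ => le_abs_self _) ?_
    intro heq
    apply hne
    have hnn : ∀ i, 0 ≤ z i := by
      have h := (Finset.sum_eq_sum_iff_of_le (fun i _ => le_abs_self (z i))).1 heq
      intro i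
      rw [h i (Finset.mem_univ i)]; exact abs_nonneg _
    set S := Finset.univ.filter (fun i => x₀ i ≠ 0) with hS
    have hoff0 : ∀ i, i ∉ S → z₀ i = 0 := by
      intro i hi
      have : x₀ i = 0 := by simpa [hS] using hi
      rw [hz, this, mul_zero]
    have hdeg : ∀ T : Finset (Fin n),
        (∏ j ∈ T, (Polynomial.X - Polynomial.C (lam j))).natDegree = T.card := by
      intro T
      exact Polynomial.natDegree_finsetProd_X_sub_C_eq_card T lam
    have hev : ∀ (T : Finset (Fin n)) (i : Fin n),
        (∏ j ∈ T, (Polynomial.X - Polynomial.C (lam j))).eval (lam i) = 0 ↔ i ∈ T := by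
      intro T i
      rw [Polynomial.eval_prod, Finset.prod_eq_zero_iff]
      simp only [Polynomial.eval_sub, Polynomial.eval_X, Polynomial.eval_C, sub_eq_zero]
      constructor
      · rintro ⟨j, hj, h⟩
        rw [hdistinct h]; exact hj
      · intro h; exact ⟨i, h, rfl⟩
    have hoff : ∀ i, i ∉ S → z i = 0 := by
      have h := hpoly ((∏ j ∈ S, (Polynomial.X - Polynomial.C (lam j))) ^ 2) (by
        rw [Polynomial.natDegree_pow, hdeg]; omega)
      have hterm : ∀ j, ((∏ j ∈ S, (Polynomial.X - Polynomial.C (lam j))) ^ 2).eval (lam j)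
          * (z j - z₀ j) =
          (∏ j ∈ S, (Polynomial.X - Polynomial.C (lam j))).eval (lam j) ^ 2 * z j := by
        intro j
        rw [Polynomial.eval_pow]
        by_cases hj : j ∈ S
        · rw [(hev S j).2 hj]; ring
        · rw [hoff0 j hj, sub_zero]
      rw [Finset.sum_congr rfl fun j _ => hterm j,
        Finset.sum_eq_zero_iff_of_nonneg fun j _ => mul_nonneg (sq_nonneg _) (hnn j)] at h
      intro i hi
      rcases mul_eq_zero.1 (h i (Finset.mem_univ i)) with h1 | h1
      · exact absurd ((hev S i).1 (pow_eq_zero_iff two_ne_zero |>.1 h1)) hi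
      · exact h1
    ext i
    by_cases hi : i ∈ S
    · have h := hpoly (∏ j ∈ S.erase i, (Polynomial.X - Polynomial.C (lam j))) (by
        rw [hdeg]
        have := Finset.card_erase_le (s := S) (a := i)
        omega)
      rw [Finset.sum_eq_single i] at h
      · rcases mul_eq_zero.1 h with h1 | h1
        · exact absurd ((hev _ i).1 h1) (Finset.notMem_erase i S)
        · linarith
      · intro j _ hji
        by_cases hj : j ∈ S
        · rw [(hev _ j).2 (Finset.mem_erase.2 ⟨hji, hj⟩), zero_mul]
        · rw [hoff j hj, hoff0 j hj, sub_zero, mul_zero]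
      · intro h'; exact absurd (Finset.mem_univ i) h'
    · rw [hoff i hi, hoff0 i hi]
  · rw [hz, mul_div_cancel_left₀ _ (hC i)]
end

section
/- (Null-space condition, necessity.) Let Φ ∈ ℝ^{m×n} and K ≥ 1. Suppose that every K-sparse vector x ∈ ℝ^n is the unique minimizer of ‖·‖₁ over {x' ∈ ℝ^n : Φ x' = Φ x}. Then for every nonzero w ∈ ℝ^n with Φ w = 0 and every subset T ⊆ {1, …, n} with |T| = K, one has ∑_{i ∈ T} |w_i| < ∑_{j ∈ T^c} |w_j|, where T^c = {1, …, n} \ T. -/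
open Matrix

/-- Null-space condition, necessity: if every `K`-sparse `x` is the
unique ℓ1-minimizer over `{x' : Φ x' = Φ x}`, then every nonzero kernel vector `w`
of `Φ` satisfies `∑_{i ∈ T} |w_i| < ∑_{j ∈ Tᶜ} |w_j|` for every index set `T` of
size `K`. -/
theorem null_space_condition_necessary_l1_recovery
    {m n K : ℕ} (hK : 1 ≤ K)
    (Φ : Matrix (Fin m) (Fin n) ℝ)
    (huniq : ∀ x : Fin n → ℝ, (Finset.univ.filter (fun i => x i ≠ 0)).card ≤ K →
      ∀ x' : Fin n → ℝ, Φ.mulVec x' = Φ.mulVec x → x' ≠ x →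
        ∑ i, |x i| < ∑ i, |x' i|)
    (w : Fin n → ℝ) (hw0 : w ≠ 0) (hker : Φ.mulVec w = 0)
    (T : Finset (Fin n)) (hT : T.card = K) :
    ∑ i ∈ T, |w i| < ∑ j ∈ Tᶜ, |w j| := by
  have h := huniq (fun i => if i ∈ T then w i else 0) (by
      rw [← hT]
      apply Finset.card_le_card
      intro i hi
      by_contra hc
      simp [hc] at hi)
    ((fun i => if i ∈ T then w i else 0) - w)
    (by rw [Matrix.mulVec_sub, hker, sub_zero])
    (by
      intro hc
      exact hw0 (sub_eq_self.mp hc))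
  rw [← Finset.sum_add_sum_compl T, ← Finset.sum_add_sum_compl T (fun i => |((fun i => if i ∈ T then w i else 0) - w) i|)] at h
  have e1 : ∑ i ∈ T, |(if i ∈ T then w i else 0)| = ∑ i ∈ T, |w i| :=
    Finset.sum_congr rfl (fun i hi => by simp [hi])
  have e2 : ∑ i ∈ Tᶜ, |(if i ∈ T then w i else 0)| = 0 :=
    Finset.sum_eq_zero (fun i hi => by simp [Finset.mem_compl.mp hi])
  have e3 : ∑ i ∈ T, |((fun i => if i ∈ T then w i else 0) - w) i| = 0 :=
    Finset.sum_eq_zero (fun i hi => by simp [hi])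
  have e4 : ∑ i ∈ Tᶜ, |((fun i => if i ∈ T then w i else 0) - w) i| = ∑ i ∈ Tᶜ, |w i| :=
    Finset.sum_congr rfl (fun i hi => by simp [Finset.mem_compl.mp hi])
  rw [e1, e2, e3, e4] at h
  simpa using h
end
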